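/- Let G be a finite tree (a finite connected acyclic simple graph) on vertex set V and let S′ be a finite set of vertices of G. Then there exists a matching M of S′, i.e., a set of pairwise disjoint two-element subsets of S′, such that at most one element of S′ is not covered by M, and such that for any two distinct pairs {u, v} and {u′, v′} in M, the unique path in G between u and v and the unique path in G between u′ and v′ are edge-disjoint. -/

import Mathlib

/-- The (unfrozen) notion of an almost perfect matching of `S`. -/
def TMGood {V : Type*} [DecidableEq V] (S : Finset V) (M : Finset (Finset V)) : Prop :=
  (∀ p ∈ M, p.card = 2 ∧ p ⊆ S) ∧
  (∀ p ∈ M, ∀ q ∈ M, ∀ x, x ∈ p → x ∈ q → p = q) ∧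
  (∀ x ∈ S, ∀ y ∈ S, (∀ p ∈ M, x ∉ p) → (∀ p ∈ M, y ∉ p) → x = y)

theorem tm_exists_good {V : Type*} [DecidableEq V] (n : ℕ) :
    ∀ S : Finset V, S.card = n → ∃ M, TMGood S M := by
  induction n using Nat.strong_induction_on with
  | _ n ih =>
    intro S hS
    by_cases h : S.card ≤ 1
    · refine ⟨∅, by simp, by simp, ?_⟩
      intro x hx y hy _ _
      exact Finset.card_le_one.mp h x hx y hy
    · obtain ⟨a, ha, b, hb, hab⟩ := Finset.one_lt_card.mp (not_le.mp h)
      have hlt : ((S.erase a).erase b).card < n := by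
        rw [← hS]
        refine lt_of_le_of_lt (Finset.card_le_card (Finset.erase_subset _ _)) ?_
        exact Finset.card_erase_lt_of_mem ha
      obtain ⟨M, h1, h2, h3⟩ := ih _ hlt _ rfl
      have h1' : ∀ p ∈ M, ∀ x ∈ p, x ∈ S ∧ x ≠ a ∧ x ≠ b := by
        intro p hp x hx
        have := (h1 p hp).2 hx
        simp at this
        tauto
      refine ⟨insert {a, b} M, ?_, ?_, ?_⟩
      · intro p hp
        rcases Finset.mem_insert.mp hp with rfl | hp
        · refine ⟨Finset.card_pair hab, ?_⟩
          intro x hx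
          simp at hx
          rcases hx with rfl | rfl <;> assumption
        · exact ⟨(h1 p hp).1, fun x hx => (h1' p hp x hx).1⟩
      · intro p hp q hq x hxp hxq
        rcases Finset.mem_insert.mp hp with rfl | hp <;>
          rcases Finset.mem_insert.mp hq with rfl | hq
        · rfl
        · have := h1' q hq x hxq
          simp at hxp
          tauto
        · have := h1' p hp x hxp
          simp at hxq
          tauto
        · exact h2 p hp q hq x hxp hxq
      · intro x hx y hy hxM hyM
        have hx0 := hxM {a, b} (by simp)
        have hy0 := hyM {a, b} (by simp)
        simp at hx0 hy0
        apply h3 x (by simp; tauto) y (by simp; tauto)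
        · exact fun p hp => hxM p (by simp [hp])
        · exact fun p hp => hyM p (by simp [hp])

theorem tm_walk_edge {V : Type*} {G : SimpleGraph V} (hG : G.Connected) {u v : V}
    (P : G.Walk u v) (a b : V) (h : s(a, b) ∈ P.edges) :
    G.dist u a + 1 + G.dist b v ≤ P.length ∨ G.dist u b + 1 + G.dist a v ≤ P.length := by
  induction P with
  | nil => simp at h
  | @cons u w v hadj p ih =>
    rw [SimpleGraph.Walk.edges_cons, List.mem_cons] at h
    rw [SimpleGraph.Walk.length_cons]
    rcases h with h | h
    · have := SimpleGraph.dist_le p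
      rcases Sym2.eq_iff.mp h with ⟨rfl, rfl⟩ | ⟨rfl, rfl⟩
      · left; simp; omega
      · right; simp; omega
    · have hd : G.dist u w = 1 := SimpleGraph.dist_eq_one_iff_adj.mpr hadj
      have h1 := hG.dist_triangle (u := u) (v := w) (w := a)
      have h2 := hG.dist_triangle (u := u) (v := w) (w := b)
      rcases ih h with h | h
      · left; omega
      · right; omega

theorem tm_path_length {V : Type*} {G : SimpleGraph V} (hG : G.IsTree) {u v : V}
    (P : G.Path u v) : (P : G.Walk u v).length = G.dist u v := by
  obtain ⟨Q, hQ, hl⟩ := hG.connected.exists_path_of_dist u v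
  have := (hG.isAcyclic.subsingleton_path u v).elim P ⟨Q, hQ⟩
  rw [this]; exact hl

/-- Weight of a block. -/
noncomputable def tmW {V : Type*} (G : SimpleGraph V) (p : Finset V) : ℕ :=
  ∑ x ∈ p, ∑ y ∈ p, G.dist x y

theorem tmW_pair {V : Type*} [DecidableEq V] (G : SimpleGraph V) {a b : V} (h : a ≠ b) :
    tmW G {a, b} = 2 * G.dist a b := by
  unfold tmW
  rw [Finset.sum_pair h, Finset.sum_pair h, Finset.sum_pair h, G.dist_comm (u := b) (v := a)]
  simp; ring

theorem tm_pair_eq {V : Type*} [DecidableEq V] {p : Finset V} (hp : p.card = 2) {u v : V}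
    (hu : u ∈ p) (hv : v ∈ p) (h : u ≠ v) : p = {u, v} := by
  symm
  apply Finset.eq_of_subset_of_card_le
  · intro x hx
    simp at hx
    rcases hx with rfl | rfl <;> assumption
  · rw [hp, Finset.card_pair h]

theorem tm_swap {V : Type*} [DecidableEq V] (G : SimpleGraph V) {S : Finset V}
    {M : Finset (Finset V)} (hM : TMGood S M) {u v u' v' : V} (huv : u ≠ v) (huv' : u' ≠ v')
    (hp : {u, v} ∈ M) (hq : {u', v'} ∈ M) (hne : ({u, v} : Finset V) ≠ {u', v'})
    (hlt : G.dist u u' + G.dist v v' < G.dist u v + G.dist u' v') :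
    ∃ M', TMGood S M' ∧ ∑ p ∈ M', tmW G p < ∑ p ∈ M, tmW G p := by
  obtain ⟨h1, h2, h3⟩ := hM
  have d1 : u ≠ u' := fun h => hne (h2 _ hp _ hq u (by simp) (by simp [h]))
  have d2 : u ≠ v' := fun h => hne (h2 _ hp _ hq u (by simp) (by simp [h]))
  have d3 : v ≠ u' := fun h => hne (h2 _ hp _ hq v (by simp) (by simp [h]))
  have d4 : v ≠ v' := fun h => hne (h2 _ hp _ hq v (by simp) (by simp [h]))
  set R := (M.erase {u, v}).erase {u', v'} with hR
  have hMR : M = insert {u, v} (insert {u', v'} R) := by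
    rw [hR, Finset.insert_erase, Finset.insert_erase hp]
    exact Finset.mem_erase.mpr ⟨hne.symm, hq⟩
  have hRM : ∀ r ∈ R, r ∈ M := fun r hr => by rw [hMR]; simp [hr]
  have hRx : ∀ r ∈ R, ∀ x ∈ r, x ≠ u ∧ x ≠ v ∧ x ≠ u' ∧ x ≠ v' := by
    intro r hr x hx
    have e1 : r ≠ {u', v'} := (Finset.mem_erase.mp hr).1
    have e2 : r ≠ {u, v} := (Finset.mem_erase.mp (Finset.mem_erase.mp hr).2).1
    refine ⟨?_, ?_, ?_, ?_⟩ <;> rintro rfl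
    · exact e2 (h2 _ (hRM r hr) _ hp _ hx (by simp))
    · exact e2 (h2 _ (hRM r hr) _ hp _ hx (by simp))
    · exact e1 (h2 _ (hRM r hr) _ hq _ hx (by simp))
    · exact e1 (h2 _ (hRM r hr) _ hq _ hx (by simp))
  have hpS := (h1 _ hp).2
  have hqS := (h1 _ hq).2
  have hu : u ∈ S := hpS (by simp)
  have hv : v ∈ S := hpS (by simp)
  have hu' : u' ∈ S := hqS (by simp)
  have hv' : v' ∈ S := hqS (by simp)
  have n1 : ({v, v'} : Finset V) ∉ R := fun h => (hRx _ h v (by simp)).2.1 rfl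
  have n2 : ({u, u'} : Finset V) ∉ insert {v, v'} R := by
    intro h
    rcases Finset.mem_insert.mp h with h | h
    · have : u ∈ ({v, v'} : Finset V) := by rw [← h]; simp
      simp at this; tauto
    · exact (hRx _ h u (by simp)).1 rfl
  have n3 : ({u', v'} : Finset V) ∉ R := by simp [hR]
  have n4 : ({u, v} : Finset V) ∉ insert {u', v'} R := by simp [hR, hne]
  refine ⟨insert {u, u'} (insert {v, v'} R), ⟨?_, ?_, ?_⟩, ?_⟩
  · intro p hp
    simp only [Finset.mem_insert] at hp
    rcases hp with rfl | rfl | hp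
    · refine ⟨Finset.card_pair d1, ?_⟩
      simp [Finset.insert_subset_iff, hu, hu']
    · refine ⟨Finset.card_pair d4, ?_⟩
      simp [Finset.insert_subset_iff, hv, hv']
    · exact h1 p (hRM p hp)
  · intro p hp q hq x hxp hxq
    simp only [Finset.mem_insert] at hp hq
    rcases hp with rfl | rfl | hp <;> rcases hq with rfl | rfl | hq
    · rfl
    · simp at hxp hxq; grind
    · have := hRx q hq x hxq
      simp at hxp; tauto
    · simp at hxp hxq; grind
    · rfl
    · have := hRx q hq x hxq
      simp at hxp; tauto
    · have := hRx p hp x hxp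
      simp at hxq; tauto
    · have := hRx p hp x hxp
      simp at hxq; tauto
    · exact h2 _ (hRM p hp) _ (hRM q hq) x hxp hxq
  · have key : ∀ x, (∀ p ∈ insert {u, u'} (insert {v, v'} R), x ∉ p) → ∀ p ∈ M, x ∉ p := by
      intro x hx
      rw [hMR]
      simp at hx ⊢
      tauto
    intro x hx y hy hxM hyM
    exact h3 x hx y hy (key x hxM) (key y hyM)
  · rw [Finset.sum_insert n2, Finset.sum_insert n1, hMR, Finset.sum_insert n4,
      Finset.sum_insert n3, tmW_pair G d1, tmW_pair G d4, tmW_pair G huv, tmW_pair G huv']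
    omega


/-- Lemma 1.6: in a finite tree `G`, any finite set `S'` of vertices admits a matching
(a set of pairwise disjoint two-element subsets of `S'`) leaving at most one vertex of
`S'` unmatched, such that the unique tree-paths connecting the two endpoints of
distinct pairs are edge-disjoint. -/
theorem tree_matching_edge_disjoint_paths {V : Type*} [Fintype V] [DecidableEq V]
    (G : SimpleGraph V) (hG : G.IsTree) (S' : Finset V) :
    ∃ M : Finset (Finset V),
      (∀ p ∈ M, p.card = 2 ∧ p ⊆ S') ∧
      ((M : Set (Finset V)).Pairwise fun p q => Disjoint p q) ∧
      (S'.filter fun v => ∀ p ∈ M, v ∉ p).card ≤ 1 ∧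
      (∀ p ∈ M, ∀ q ∈ M, p ≠ q →
        ∀ u v u' v' : V, u ∈ p → v ∈ p → u ≠ v → u' ∈ q → v' ∈ q → u' ≠ v' →
          ∀ (P : G.Path u v) (Q : G.Path u' v'),
            ∀ e ∈ (P : G.Walk u v).edges, e ∉ (Q : G.Walk u' v').edges) := by
  classical
  obtain ⟨M, hM, hmin⟩ : ∃ M, TMGood S' M ∧
      ∀ M', TMGood S' M' → ∑ p ∈ M, tmW G p ≤ ∑ p ∈ M', tmW G p := by
    obtain ⟨M0, hM0⟩ := tm_exists_good _ S' rfl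
    obtain ⟨M, hM, hmin⟩ := Finset.exists_min_image
      (Finset.univ.filter fun M => TMGood S' M) (fun M => ∑ p ∈ M, tmW G p)
      ⟨M0, by simpa using hM0⟩
    exact ⟨M, by simpa using hM, fun M' hM' => hmin M' (by simpa using hM')⟩
  refine ⟨M, hM.1, ?_, ?_, ?_⟩
  · intro p hp q hq hpq
    rw [Finset.disjoint_left]
    exact fun x hxp hxq => hpq (hM.2.1 p hp q hq x hxp hxq)
  · rw [Finset.card_le_one]
    intro x hx y hy
    rw [Finset.mem_filter] at hx hy
    exact hM.2.2 x hx.1 y hy.1 hx.2 hy.2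
  · intro p hp q hq hpq u v u' v' hu hv huv hu' hv' huv' P Q e heP heQ
    obtain rfl := tm_pair_eq (hM.1 p hp).1 hu hv huv
    obtain rfl := tm_pair_eq (hM.1 q hq).1 hu' hv' huv'
    have no : ∀ x y : V, x ≠ y → ({x, y} : Finset V) = {u', v'} →
        ¬ (G.dist u x + G.dist v y < G.dist u v + G.dist x y) := by
      intro x y hxy he hlt
      obtain ⟨M', hM', hl⟩ := tm_swap G hM huv hxy hp (he ▸ hq) (he ▸ hpq) hlt
      exact absurd (hmin M' hM') (not_le.mpr hl)
    have no1 := no u' v' huv' rfl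
    have no2 := no v' u' huv'.symm (Finset.pair_comm _ _)
    induction e using Sym2.ind with
    | _ a b =>
      have hc := hG.connected
      have hP := tm_walk_edge hc P.1 a b heP
      have hQ := tm_walk_edge hc Q.1 a b heQ
      rw [tm_path_length hG] at hP hQ
      have t1 := hc.dist_triangle (u := u) (v := a) (w := u')
      have t2 := hc.dist_triangle (u := u) (v := b) (w := u')
      have t3 := hc.dist_triangle (u := u) (v := a) (w := v')
      have t4 := hc.dist_triangle (u := u) (v := b) (w := v')
      have t5 := hc.dist_triangle (u := v) (v := a) (w := u')
      have t6 := hc.dist_triangle (u := v) (v := b) (w := u')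
      have t7 := hc.dist_triangle (u := v) (v := a) (w := v')
      have t8 := hc.dist_triangle (u := v) (v := b) (w := v')
      have c1 := G.dist_comm (u := a) (v := u')
      have c2 := G.dist_comm (u := b) (v := u')
      have c3 := G.dist_comm (u := a) (v := v)
      have c4 := G.dist_comm (u := b) (v := v)
      have c5 := G.dist_comm (u := u') (v := v')
      omega
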